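/- arXiv:1903.05011 — 2 statements merged into one kernel-verified Lean document; each statement's English description precedes it below -/
import Mathlib

section
/- The polynomial x⁷ + 2y⁷ + 4z⁷ does not lie in the ℂ-subalgebra of ℂ[x,y,z] generated by the six polynomials xⁱ + 2yⁱ + 4zⁱ for 1 ≤ i ≤ 6. -/
open MvPolynomial

/-!
Write `pᵢ = xⁱ + 2yⁱ + 4zⁱ`. By homogeneity, if `p₇` is a polynomial in the other `pᵢ`, it is a
linear combination of the products `∏ p_{i_k}` with `∑ i_k = 7`. Modulo `p₁` and `p₂` the only such
product that survives is `p₃ p₄`, so `p₇ = b p₃ p₄` at all common zeros of `p₁` and `p₂`, with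
the same scalar `b`. With `ω² = -14`, a common zero is `(-4 - 2ω, -4 + ω, 3)`, and there `p₇` is
not a scalar multiple of `p₃ p₄`.
-/

section Graded

variable {R A ι κ : Type*} [CommSemiring R] [CommSemiring A] [Algebra R A]

theorem exists_multiset_map_prod_of_mem_closure_image {s : Set κ} {p : κ → A} {g : A}
    (hg : g ∈ Submonoid.closure (p '' s)) :
    ∃ m : Multiset κ, (∀ k ∈ m, k ∈ s) ∧ (m.map p).prod = g := by
  induction hg using Submonoid.closure_induction with
  | mem _ hx =>
    obtain ⟨k, hk, rfl⟩ := hx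
    exact ⟨{k}, by simpa using hk, by simp⟩
  | one => exact ⟨0, by simp, by simp⟩
  | mul _ _ _ _ hx hy =>
    obtain ⟨m, hm, rfl⟩ := hx
    obtain ⟨n, hn, rfl⟩ := hy
    refine ⟨m + n, fun k hk => ?_, by simp⟩
    exact (Multiset.mem_add.mp hk).elim (hm k) (hn k)

theorem multiset_map_prod_mem_graded [AddCommMonoid ι] (𝒜 : ι → Submodule R A)
    [SetLike.GradedMonoid 𝒜] {p : κ → A} {d : κ → ι} (m : Multiset κ)
    (hp : ∀ k ∈ m, p k ∈ 𝒜 (d k)) : (m.map p).prod ∈ 𝒜 (m.map d).sum := by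
  induction m using Quotient.inductionOn with
  | h l => simpa using SetLike.list_prod_map_mem_graded l d p hp

theorem mem_span_multiset_map_prod_of_mem_adjoin [AddCommMonoid ι] [DecidableEq ι]
    (𝒜 : ι → Submodule R A) [GradedAlgebra 𝒜] {s : Set κ} {p : κ → A} {d : κ → ι}
    (hp : ∀ k ∈ s, p k ∈ 𝒜 (d k)) {n : ι} {f : A} (hfn : f ∈ 𝒜 n)
    (hf : f ∈ Algebra.adjoin R (p '' s)) :
    f ∈ Submodule.span R
      {g | ∃ m : Multiset κ, (∀ k ∈ m, k ∈ s) ∧ (m.map d).sum = n ∧ (m.map p).prod = g} := by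
  set products : Set A :=
    {g | ∃ m : Multiset κ, (∀ k ∈ m, k ∈ s) ∧ (m.map d).sum = n ∧ (m.map p).prod = g}
  rw [← Subalgebra.mem_toSubmodule, Algebra.adjoin_eq_span] at hf
  suffices h : Submodule.span R (Submonoid.closure (p '' s) : Set A) ≤
      (Submodule.span R products).comap (GradedAlgebra.proj 𝒜 n) by
    simpa [DirectSum.decompose_of_mem_same 𝒜 hfn] using h hf
  refine Submodule.span_le.mpr fun g hg => ?_
  obtain ⟨m, hms, rfl⟩ := exists_multiset_map_prod_of_mem_closure_image hg
  have hm := multiset_map_prod_mem_graded 𝒜 m fun k hk => hp k (hms k hk)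
  rw [SetLike.mem_coe, Submodule.mem_comap, GradedAlgebra.proj_apply]
  by_cases hmn : (m.map d).sum = n
  · rw [DirectSum.decompose_of_mem_same 𝒜 (hmn ▸ hm)]
    exact Submodule.subset_span ⟨m, hms, hmn, rfl⟩
  · rw [DirectSum.decompose_of_mem_ne 𝒜 hm hmn]
    exact Submodule.zero_mem _

end Graded

theorem multiset_eq_three_four_of_sum_eq_seven {m : Multiset ℕ} (hm : ∀ k ∈ m, 3 ≤ k)
    (h7 : 7 ∉ m) (hsum : m.sum = 7) : m = {3, 4} := by
  have hcard : m.card ≤ 2 := by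
    have := Multiset.card_nsmul_le_sum hm
    rw [smul_eq_mul] at this
    omega
  interval_cases h : m.card
  · simp_all
  · obtain ⟨a, rfl⟩ := Multiset.card_eq_one.mp h
    simp_all
  · obtain ⟨a, b, rfl⟩ := Multiset.card_eq_two.mp h
    simp only [Multiset.insert_eq_cons, Multiset.mem_cons, Multiset.mem_singleton,
      forall_eq_or_imp, forall_eq, Multiset.sum_cons, Multiset.sum_singleton] at hm hsum
    obtain ⟨rfl, rfl⟩ | ⟨rfl, rfl⟩ : a = 3 ∧ b = 4 ∨ a = 4 ∧ b = 3 := by omega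
    · rfl
    · exact Multiset.pair_comm 4 3

theorem exists_smul_mul_eq_map_of_mem_adjoin {R A B : Type*} [CommSemiring R]
    [CommSemiring A] [Algebra R A] [CommSemiring B] [Algebra R B] (𝒜 : ℕ → Submodule R A)
    [GradedAlgebra 𝒜] {p : ℕ → A} (hp : ∀ i, p i ∈ 𝒜 i) {f : A} (hf7 : f ∈ 𝒜 7)
    (hf : f ∈ Algebra.adjoin R (p '' {0, 7}ᶜ)) (φ : A →ₐ[R] B)
    (h1 : φ (p 1) = 0) (h2 : φ (p 2) = 0) :
    ∃ b : R, b • (φ (p 3) * φ (p 4)) = φ f := by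
  rw [← Submodule.mem_span_singleton]
  have hspan := mem_span_multiset_map_prod_of_mem_adjoin (d := id) 𝒜 (fun i _ => hp i) hf7 hf
  suffices h : _ ≤ (Submodule.span R {φ (p 3) * φ (p 4)}).comap φ.toLinearMap from h hspan
  refine Submodule.span_le.mpr ?_
  rintro _ ⟨m, hms, hsum, rfl⟩
  rw [Multiset.map_id] at hsum
  rw [SetLike.mem_coe, Submodule.mem_comap, AlgHom.toLinearMap_apply, map_multiset_prod,
    Multiset.map_map]
  by_cases hm : 1 ∈ m ∨ 2 ∈ m
  · have hzero : (m.map (φ ∘ p)).prod = 0 := by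
      refine Multiset.prod_eq_zero (Multiset.mem_map.mpr ?_)
      exact hm.elim (fun h => ⟨1, h, h1⟩) (fun h => ⟨2, h, h2⟩)
    exact hzero ▸ Submodule.zero_mem _
  · have hge : ∀ k ∈ m, 3 ≤ k := by
      intro k hk
      have := hms k hk
      by_contra! hlt
      interval_cases k <;> simp_all
    obtain rfl := multiset_eq_three_four_of_sum_eq_seven hge (fun h => hms 7 h (by simp)) hsum
    simp [Submodule.mem_span_singleton_self]

section WeightedPowerSum

variable {R S σ : Type*} [CommSemiring R] [CommSemiring S] [Algebra R S] [Fintype σ]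

/-- The power sum `∑ j, w j * X j ^ n` of degree `n` with weights `w`; `MvPolynomial.psum` is the
case where all weights are `1`. -/
noncomputable def weightedPsum (w : σ → R) (n : ℕ) : MvPolynomial σ R :=
  ∑ j, C (w j) * X j ^ n

theorem isHomogeneous_weightedPsum (w : σ → R) (n : ℕ) : (weightedPsum w n).IsHomogeneous n :=
  .sum _ _ _ fun j _ => (isHomogeneous_X_pow j n).C_mul (w j)

theorem aeval_weightedPsum (w : σ → R) (n : ℕ) (P : σ → S) :
    aeval P (weightedPsum w n) = ∑ j, w j • P j ^ n := by
  simp [weightedPsum, Algebra.smul_def]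

theorem weightedPsum_one_two_four (n : ℕ) :
    weightedPsum (![1, 2, 4] : Fin 3 → R) n = X 0 ^ n + 2 * X 1 ^ n + 4 * X 2 ^ n := by
  simp [weightedPsum, Fin.sum_univ_three, map_ofNat C]

end WeightedPowerSum

section CommonZero

variable (R : Type*) [CommRing R]

/-- The point `(-4 - 2ω, -4 + ω, 3)` with `ω² = -14`, a common zero of `x + 2y + 4z` and
`x² + 2y² + 4z²`. Working in `QuadraticAlgebra R (-14) 0` makes `1` and `ω` linearly independent
over `R` even when `-14` is a square in `R`, as it is in `ℂ`. -/
def commonZero : Fin 3 → QuadraticAlgebra R (-14) 0 :=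
  ![⟨-4, -2⟩, ⟨-4, 1⟩, ⟨3, 0⟩]

theorem aeval_commonZero_weightedPsum (n : ℕ) :
    aeval (commonZero R) (weightedPsum (![1, 2, 4] : Fin 3 → R) n) =
      ⟨-4, -2⟩ ^ n + (2 : R) • ⟨-4, 1⟩ ^ n + (4 : R) • ⟨3, 0⟩ ^ n := by
  simp [aeval_weightedPsum, Fin.sum_univ_three, commonZero]

theorem aeval_commonZero_weightedPsum_one :
    aeval (commonZero R) (weightedPsum (![1, 2, 4] : Fin 3 → R) 1) = 0 := by
  ext <;> norm_num [aeval_commonZero_weightedPsum]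

theorem aeval_commonZero_weightedPsum_two :
    aeval (commonZero R) (weightedPsum (![1, 2, 4] : Fin 3 → R) 2) = 0 := by
  ext <;> norm_num [aeval_commonZero_weightedPsum, pow_succ]

theorem aeval_commonZero_weightedPsum_three :
    aeval (commonZero R) (weightedPsum (![1, 2, 4] : Fin 3 → R) 3) = ⟨84 * 11, 84⟩ := by
  ext <;> norm_num [aeval_commonZero_weightedPsum, pow_succ]

theorem aeval_commonZero_weightedPsum_four :
    aeval (commonZero R) (weightedPsum (![1, 2, 4] : Fin 3 → R) 4) =
      ⟨-84 * 41, -84 * 16⟩ := by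
  ext <;> norm_num [aeval_commonZero_weightedPsum, pow_succ]

theorem aeval_commonZero_weightedPsum_seven :
    aeval (commonZero R) (weightedPsum (![1, 2, 4] : Fin 3 → R) 7) =
      ⟨-84 * 12689, -84 * 10444⟩ := by
  ext <;> norm_num [aeval_commonZero_weightedPsum, pow_succ]

end CommonZero

attribute [local instance] MvPolynomial.gradedAlgebra in
theorem stmt_15_general {R : Type*} [CommRing R] (h210 : ¬ IsNilpotent (210 : R)) :
    (X 0 ^ 7 + 2 * X 1 ^ 7 + 4 * X 2 ^ 7 : MvPolynomial (Fin 3) R) ∉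
      Algebra.adjoin R
        ((fun i : ℕ =>
            (X 0 ^ i + 2 * X 1 ^ i + 4 * X 2 ^ i : MvPolynomial (Fin 3) R)) ''
          {0, 7}ᶜ) := by
  simp only [← weightedPsum_one_two_four]
  intro hmem
  obtain ⟨b, hb⟩ := exists_smul_mul_eq_map_of_mem_adjoin (homogeneousSubmodule (Fin 3) R)
    (isHomogeneous_weightedPsum _) (isHomogeneous_weightedPsum _ 7) hmem (aeval (commonZero R))
    (aeval_commonZero_weightedPsum_one R) (aeval_commonZero_weightedPsum_two R)
  rw [aeval_commonZero_weightedPsum_three, aeval_commonZero_weightedPsum_four,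
    aeval_commonZero_weightedPsum_seven, QuadraticAlgebra.mk_mul_mk, QuadraticAlgebra.smul_mk,
    QuadraticAlgebra.mk.injEq] at hb
  obtain ⟨hre, him⟩ := hb
  simp only [smul_eq_mul] at hre him
  -- Up to powers of 84, the determinant of the coordinates of `p₃ p₄` and `p₇` in the basis `1, ω`.
  have hdet : (2 ^ 2 * 3 ^ 8 * 5 ^ 2 * 7 ^ 2 : R) = 0 := by
    linear_combination 217 * hre - 227 * him
  exact h210 ⟨8, by linear_combination 70 ^ 6 * hdet⟩

/-- The polynomial `x⁷ + 2y⁷ + 4z⁷` does not lie in the `ℂ`-subalgebra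
of `ℂ[x,y,z]` generated by the six polynomials `xⁱ + 2yⁱ + 4zⁱ`, `1 ≤ i ≤ 6`. -/
theorem stmt_15 :
    (X 0 ^ 7 + 2 * X 1 ^ 7 + 4 * X 2 ^ 7 : MvPolynomial (Fin 3) ℂ) ∉
      Algebra.adjoin ℂ
        ((fun i : ℕ =>
            (X 0 ^ i + 2 * X 1 ^ i + 4 * X 2 ^ i : MvPolynomial (Fin 3) ℂ)) ''
          Set.Icc 1 6) := by
  have hsub : Set.Icc 1 6 ⊆ ({0, 7}ᶜ : Set ℕ) := by grind
  exact fun hmem => stmt_15_general (by simp) (Algebra.adjoin_mono (Set.image_mono hsub) hmem)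
end

section
/- Let m = (m₁,m₂) ∈ ℂ² with m₁, m₂ and m₁+m₂ all nonzero, and set p_j := m₁x₁ʲ + m₂x₂ʲ ∈ ℂ[x₁,x₂]. Then for every j ≥ 1, p_j lies in the ℂ-subalgebra of ℂ[x₁,x₂] generated by p₁, p₂, p₃. -/
open MvPolynomial

/-!
Translating the variables by an element `a` of a subalgebra `S` does not affect whether
`p₀, …, pₙ` all lie in `S`, by the binomial theorem. As the total weight is invertible, we
may take `a` to be the weighted mean, and so assume `p₁ = 0`. In two variables, `p₁ = 0` forces
both squares `x₀²`, `x₁²` to be scalar multiples of `p₂`, and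
`pₙ₊₄ = (x₀² + x₁²) pₙ₊₂ - x₀² x₁² pₙ` then generates every `pₙ` from `p₀, …, p₃`; if one of the
weights vanishes, `p₁ = 0` kills the other variable, so that `pₙ = 0` for all `n ≥ 1`.
-/

section FiniteFamily

variable {ι R A : Type*} [Fintype ι] [CommSemiring R]

/-- The weighted power sum `pₙ(m; x) = ∑ i, m i • x i ^ n` of a finite family `x` of elements of
an algebra. The weighted power sum polynomial is the case `x = MvPolynomial.X`. -/
def weightedPowerSum [Semiring A] [Algebra R A] (m : ι → R) (x : ι → A) (n : ℕ) : A :=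
  ∑ i, m i • x i ^ n

theorem weightedPowerSum_zero [Semiring A] [Algebra R A] (m : ι → R) (x : ι → A) :
    weightedPowerSum m x 0 = algebraMap R A (∑ i, m i) := by
  simp [weightedPowerSum, Algebra.algebraMap_eq_smul_one]

theorem weightedPowerSum_add_const_one [Semiring A] [Algebra R A] (m : ι → R) (x : ι → A) (a : A) :
    weightedPowerSum m (fun i => x i + a) 1 = weightedPowerSum m x 1 + (∑ i, m i) • a := by
  simp [weightedPowerSum, Finset.sum_add_distrib, Finset.sum_smul]

variable [CommSemiring A] [Algebra R A] {S : Subalgebra R A} {m : ι → R} {x : ι → A}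

theorem weightedPowerSum_add_const (m : ι → R) (x : ι → A) (a : A) (n : ℕ) :
    weightedPowerSum m (fun i => x i + a) n =
      ∑ k ∈ Finset.range (n + 1), weightedPowerSum m x k * (a ^ (n - k) * n.choose k) := by
  simp only [weightedPowerSum, add_pow, Finset.smul_sum, Finset.sum_mul]
  rw [Finset.sum_comm]
  simp only [smul_mul_assoc, mul_assoc]

theorem weightedPowerSum_add_const_mem {a : A} {n : ℕ} (ha : a ∈ S)
    (hp : ∀ k ≤ n, weightedPowerSum m x k ∈ S) :
    weightedPowerSum m (fun i => x i + a) n ∈ S := by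
  rw [weightedPowerSum_add_const]
  exact sum_mem fun k hk => mul_mem (hp k (Finset.mem_range_succ_iff.mp hk))
    (mul_mem (pow_mem ha _) (natCast_mem S _))

end FiniteFamily

section TwoVariables

theorem weightedPowerSum_fin_two_add_four {R A : Type*} [CommSemiring R] [CommRing A] [Algebra R A]
    (m : Fin 2 → R) (x : Fin 2 → A) (n : ℕ) :
    weightedPowerSum m x (n + 4) =
      (x 0 ^ 2 + x 1 ^ 2) * weightedPowerSum m x (n + 2)
        - x 0 ^ 2 * x 1 ^ 2 * weightedPowerSum m x n := by
  simp only [weightedPowerSum, Fin.sum_univ_two, Algebra.smul_def]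
  ring

theorem weightedPowerSum_fin_two_mem_of_sq_mem {R A : Type*} [CommRing R] [CommRing A]
    [Algebra R A] {S : Subalgebra R A} {m : Fin 2 → R} {x : Fin 2 → A} (hx : ∀ i, x i ^ 2 ∈ S)
    (hp : ∀ k ≤ 3, weightedPowerSum m x k ∈ S) (n : ℕ) : weightedPowerSum m x n ∈ S := by
  induction n using Nat.strong_induction_on with
  | h n ih =>
    rcases le_or_gt n 3 with hn | hn
    · exact hp n hn
    · obtain ⟨k, rfl⟩ := Nat.exists_eq_add_of_le' hn
      rw [weightedPowerSum_fin_two_add_four]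
      exact sub_mem (mul_mem (add_mem (hx 0) (hx 1)) (ih (k + 2) (by lia)))
        (mul_mem (mul_mem (hx 0) (hx 1)) (ih k (by lia)))

variable {K A : Type*} [Field K] [CommRing A] [Algebra K A] {S : Subalgebra K A}

theorem sq_mem_of_smul_add_smul_eq_zero {a b : K} {u v : A} (ha : a ≠ 0) (hab : a + b ≠ 0)
    (hmean : a • u + b • v = 0) (hsq : a • u ^ 2 + b • v ^ 2 ∈ S) : u ^ 2 ∈ S := by
  have hu : (a * (a + b)) • u ^ 2 = b • (a • u ^ 2 + b • v ^ 2) := by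
    simp only [Algebra.smul_def, map_mul, map_add] at hmean ⊢
    linear_combination (algebraMap K A a * u - algebraMap K A b * v) * hmean
  rw [← Subalgebra.mem_toSubmodule, ← Submodule.smul_mem_iff _ (mul_ne_zero ha hab), hu]
  exact S.smul_mem hsq b

variable {m : Fin 2 → K} {x : Fin 2 → A}

theorem weightedPowerSum_fin_two_mem_of_one_eq_zero (hm : ∑ i, m i ≠ 0)
    (hmean : weightedPowerSum m x 1 = 0) (hp : ∀ k ≤ 3, weightedPowerSum m x k ∈ S) (n : ℕ) :
    weightedPowerSum m x n ∈ S := by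
  have hsq := hp 2 (by norm_num)
  simp only [weightedPowerSum, Fin.sum_univ_two, pow_one] at hm hmean hsq
  by_cases h₀ : m 0 = 0
  · have hx₁ : x 1 = 0 :=
      (smul_eq_zero_iff_right (by simpa [h₀] using hm)).mp (by simpa [h₀] using hmean)
    simpa [weightedPowerSum, h₀, hx₁] using S.smul_mem (pow_mem S.zero_mem n) (m 1)
  by_cases h₁ : m 1 = 0
  · have hx₀ : x 0 = 0 :=
      (smul_eq_zero_iff_right (by simpa [h₁] using hm)).mp (by simpa [h₁] using hmean)
    simpa [weightedPowerSum, h₁, hx₀] using S.smul_mem (pow_mem S.zero_mem n) (m 0)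
  refine weightedPowerSum_fin_two_mem_of_sq_mem (Fin.forall_fin_two.mpr ⟨?_, ?_⟩) hp n
  · exact sq_mem_of_smul_add_smul_eq_zero h₀ hm hmean hsq
  · rw [add_comm] at hm hmean hsq
    exact sq_mem_of_smul_add_smul_eq_zero h₁ hm hmean hsq

theorem weightedPowerSum_fin_two_mem (hm : ∑ i, m i ≠ 0)
    (hp : ∀ k ∈ Set.Icc 1 3, weightedPowerSum m x k ∈ S) (n : ℕ) :
    weightedPowerSum m x n ∈ S := by
  set a : A := (∑ i, m i)⁻¹ • weightedPowerSum m x 1 with ha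
  have ha_mem : a ∈ S := S.smul_mem (hp 1 (by simp)) _
  have hp_le : ∀ k ≤ 3, weightedPowerSum m x k ∈ S := by
    rintro (_ | k) hk
    · exact weightedPowerSum_zero m x ▸ S.algebraMap_mem _
    · exact hp _ ⟨k.succ_pos, hk⟩
  have hmean : weightedPowerSum m (fun i => x i + -a) 1 = 0 := by
    rw [weightedPowerSum_add_const_one, smul_neg, ha, smul_inv_smul₀ hm, add_neg_cancel]
  have hcentered : ∀ k, weightedPowerSum m (fun i => x i + -a) k ∈ S :=
    weightedPowerSum_fin_two_mem_of_one_eq_zero hm hmean fun _ hk =>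
      weightedPowerSum_add_const_mem (neg_mem ha_mem) fun l hl => hp_le l (hl.trans hk)
  simpa only [neg_add_cancel_right] using
    weightedPowerSum_add_const_mem ha_mem fun k (_ : k ≤ n) => hcentered k

end TwoVariables

theorem stmt_17_general {K A : Type*} [Field K] [CommRing A] [Algebra K A] (m : Fin 2 → K)
    (hm : ∑ i, m i ≠ 0) (x : Fin 2 → A) (n : ℕ) :
    weightedPowerSum m x n ∈ Algebra.adjoin K (weightedPowerSum m x '' Set.Icc 1 3) :=
  weightedPowerSum_fin_two_mem hm
    (fun _ hk => Algebra.subset_adjoin (Set.mem_image_of_mem _ hk)) n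

/-- Let `m = (m₁,m₂) ∈ ℂ²` with `m₁, m₂, m₁+m₂` all nonzero, and set
`p_j := m₁x₁ʲ + m₂x₂ʲ`.  Then for every `j ≥ 1`, `p_j` lies in the `ℂ`-subalgebra of
`ℂ[x₁,x₂]` generated by `p₁, p₂, p₃`. -/
theorem stmt_17 (m₁ m₂ : ℂ) (h₁ : m₁ ≠ 0) (h₂ : m₂ ≠ 0) (h₁₂ : m₁ + m₂ ≠ 0) :
    ∀ j : ℕ, 1 ≤ j →
      (C m₁ * X 0 ^ j + C m₂ * X 1 ^ j : MvPolynomial (Fin 2) ℂ) ∈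
        Algebra.adjoin ℂ
          ((fun i : ℕ =>
              (C m₁ * X 0 ^ i + C m₂ * X 1 ^ i : MvPolynomial (Fin 2) ℂ)) ''
            Set.Icc 1 3) := by
  intro j _
  have hp (i : ℕ) : (C m₁ * X 0 ^ i + C m₂ * X 1 ^ i : MvPolynomial (Fin 2) ℂ) =
      weightedPowerSum ![m₁, m₂] X i := by
    simp [weightedPowerSum, smul_eq_C_mul]
  simp only [hp]
  exact stmt_17_general ![m₁, m₂] (by simpa using h₁₂) X j
end
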